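/- For an essentially small triangulated category T, the canonical map K_0(T) → K_0(T~) induced by the fully faithful embedding of T into its idempotent completion T~ is injective. -/

import Mathlib

/-! Landsburg's criterion: in any pretriangulated category, `[A] = [B]` in `K₀` if and only if there
are distinguished triangles `C ⟶ A ⊞ D ⟶ E ⟶` and `C ⟶ B ⊞ D ⟶ E ⟶` with the same outer terms.
If `[ι A] = [ι B]`, adding complements of `C` and `E` to these triangles makes their outer terms
come from `T`. Since `ι` is full, the connecting morphisms come from `T` too, hence so do the
triangles: their middle terms are `ι U ≅ ι A ⊞ R` and `ι V ≅ ι B ⊞ R` with `[U] = [V]`.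
Then `U ⊞ B ≅ V ⊞ A` because `ι` is fully faithful, so `[A] = [B]`.
-/

open CategoryTheory Limits ZeroObject Pretriangulated

universe w v u v' u' v'' u''

namespace Paper

section K0

variable (T : Type u) [Category.{v} T] [HasZeroObject T] [Preadditive T]
  [HasShift T ℤ] [∀ n : ℤ, (shiftFunctor T n).Additive] [Pretriangulated T]

/-- The generating relations of the Grothendieck group of a pretriangulated category:
for every distinguished triangle `X ⟶ Y ⟶ Z ⟶ X⟦1⟧`, we impose `[Y] = [X] + [Z]`. -/
def K0Rels : Set (FreeAbelianGroup (Quotient (isIsomorphicSetoid T))) :=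
  { x | ∃ Tr : Triangle T, (Tr ∈ distTriang T) ∧
      x = FreeAbelianGroup.of (Quotient.mk (isIsomorphicSetoid T) Tr.obj₂) -
          FreeAbelianGroup.of (Quotient.mk (isIsomorphicSetoid T) Tr.obj₁) -
          FreeAbelianGroup.of (Quotient.mk (isIsomorphicSetoid T) Tr.obj₃) }

/-- The Grothendieck group `K₀` of a pretriangulated category: the free abelian group
on isomorphism classes of objects, modulo the relations coming from distinguished
triangles. -/
def K0 : Type u :=
  FreeAbelianGroup (Quotient (isIsomorphicSetoid T)) ⧸ AddSubgroup.closure (K0Rels T)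

instance : AddCommGroup (K0 T) :=
  inferInstanceAs (AddCommGroup (_ ⧸ AddSubgroup.closure (K0Rels T)))

variable {T}
variable {T' : Type u'} [Category.{v'} T'] [HasZeroObject T'] [Preadditive T']
  [HasShift T' ℤ] [∀ n : ℤ, (shiftFunctor T' n).Additive] [Pretriangulated T']

/-- The homomorphism `K₀(T) → K₀(T')` induced by a triangulated functor. -/
noncomputable def K0Map (F : T ⥤ T') [F.CommShift ℤ] [F.IsTriangulated] :
    K0 T →+ K0 T' :=
  QuotientAddGroup.map _ _
    (FreeAbelianGroup.map
      (Quotient.map F.obj fun _ _ h => h.elim fun e => ⟨F.mapIso e⟩))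
    (by
      refine (AddSubgroup.closure_le _).2 ?_
      rintro x ⟨Tr, hTr, rfl⟩
      simp only [SetLike.mem_coe, AddSubgroup.mem_comap]
      refine AddSubgroup.subset_closure
        (⟨F.mapTriangle.obj Tr, F.map_distinguished _ hTr, ?_⟩ : _ ∈ K0Rels T')
      simp [map_sub, FreeAbelianGroup.map_of_apply, Quotient.map_mk])

/-- `ι : T ⥤ T'` exhibits `T'` as the idempotent completion of `T` : it is a fully
faithful functor into an idempotent complete category such that every object of `T'`
is a direct summand (retract) of an object coming from `T`. -/
structure IsIdempotentCompletion {A : Type u} [Category.{v} A] {A' : Type u'}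
    [Category.{v'} A'] (ι : A ⥤ A') : Prop where
  full : ι.Full
  faithful : ι.Faithful
  complete : IsIdempotentComplete A'
  dense : ∀ Y : A', ∃ (X : A) (s : Y ⟶ ι.obj X) (r : ι.obj X ⟶ Y), s ≫ r = 𝟙 Y

end K0

end Paper

namespace Paper

/-- The set of isomorphism classes of objects of `C`. It is not an abbreviation for the quotient,
so that the monoid structure given by direct sums is not attached to a general `Quotient`. -/
def IsoClass (C : Type u) [Category.{v} C] : Type u := Quotient (isIsomorphicSetoid C)

namespace IsoClass

section Category

variable {C : Type u} [Category.{v} C]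

/-- The isomorphism class of an object. -/
def mk (X : C) : IsoClass C := Quotient.mk (isIsomorphicSetoid C) X

lemma mk_eq_mk_iff {X Y : C} : mk X = mk Y ↔ Nonempty (X ≅ Y) :=
  Quotient.eq (r := isIsomorphicSetoid C)

lemma mk_eq_mk_of_iso {X Y : C} (e : X ≅ Y) : mk X = mk Y :=
  mk_eq_mk_iff.2 ⟨e⟩

lemma mk_surjective : Function.Surjective (mk : C → IsoClass C) :=
  Quotient.mk_surjective

end Category

section DirectSum

variable {C : Type u} [Category.{v} C] [HasZeroMorphisms C] [HasBinaryBiproducts C]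

noncomputable instance : Add (IsoClass C) :=
  ⟨Quotient.map₂ (· ⊞ ·) fun _ _ ⟨e⟩ _ _ ⟨e'⟩ => ⟨biprod.mapIso e e'⟩⟩

protected lemma add_comm (x y : IsoClass C) : x + y = y + x := by
  obtain ⟨X, rfl⟩ := mk_surjective x
  obtain ⟨Y, rfl⟩ := mk_surjective y
  exact mk_eq_mk_of_iso (biprod.braiding X Y)

protected lemma add_assoc (x y z : IsoClass C) : x + y + z = x + (y + z) := by
  obtain ⟨X, rfl⟩ := mk_surjective x
  obtain ⟨Y, rfl⟩ := mk_surjective y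
  obtain ⟨Z, rfl⟩ := mk_surjective z
  exact mk_eq_mk_of_iso (biprod.associator X Y Z)

lemma mk_piObj (f : WalkingPair → C) : mk (∏ᶜ f) = mk (f .left) + mk (f .right) :=
  mk_eq_mk_of_iso
    (HasLimit.isoOfNatIso (diagramIsoPair (Discrete.functor f)) ≪≫ (biprod.isoProd _ _).symm)

variable [HasZeroObject C]

noncomputable instance : Zero (IsoClass C) := ⟨mk 0⟩

protected lemma add_zero (x : IsoClass C) : x + 0 = x := by
  obtain ⟨X, rfl⟩ := mk_surjective x
  exact (mk_eq_mk_of_iso (isoBiprodZero (isZero_zero C))).symm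

noncomputable instance : AddCommMonoid (IsoClass C) where
  add_assoc := IsoClass.add_assoc
  zero_add x := by rw [IsoClass.add_comm, IsoClass.add_zero]
  add_zero := IsoClass.add_zero
  add_comm := IsoClass.add_comm
  nsmul := nsmulRec

variable {D : Type u'} [Category.{v'} D] [HasZeroMorphisms D] [HasZeroObject D]
  [HasBinaryBiproducts D]

/-- The homomorphism of monoids of isomorphism classes induced by a functor which preserves
direct sums. -/
noncomputable def map (F : C ⥤ D) [F.PreservesZeroMorphisms] [PreservesBinaryBiproducts F] :
    IsoClass C →+ IsoClass D where
  toFun := Quotient.map F.obj fun _ _ ⟨e⟩ => ⟨F.mapIso e⟩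
  map_zero' := mk_eq_mk_of_iso F.mapZeroObject
  map_add' x y := by
    obtain ⟨X, rfl⟩ := mk_surjective x
    obtain ⟨Y, rfl⟩ := mk_surjective y
    exact mk_eq_mk_of_iso (F.mapBiprod X Y)

lemma map_injective (F : C ⥤ D) [F.PreservesZeroMorphisms] [PreservesBinaryBiproducts F]
    [F.Full] [F.Faithful] : Function.Injective (map F) := by
  intro x y h
  obtain ⟨X, rfl⟩ := mk_surjective x
  obtain ⟨Y, rfl⟩ := mk_surjective y
  obtain ⟨e⟩ := mk_eq_mk_iff.1 h
  exact mk_eq_mk_of_iso (F.preimageIso e)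

end DirectSum

section Pretriangulated

variable {C : Type u} [Category.{v} C] [HasZeroObject C] [Preadditive C]
  [HasShift C ℤ] [∀ n : ℤ, (shiftFunctor C n).Additive] [Pretriangulated C]

/-- `IsExtension x y z` says that the class `y` is an extension of `z` by `x`: there is a
distinguished triangle whose successive objects have classes `x`, `y` and `z`. -/
def IsExtension (x y z : IsoClass C) : Prop :=
  ∃ Tr ∈ distTriang C, mk Tr.obj₁ = x ∧ mk Tr.obj₂ = y ∧ mk Tr.obj₃ = z

lemma isExtension_add (x z : IsoClass C) : IsExtension x (x + z) z := by
  obtain ⟨X, rfl⟩ := mk_surjective x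
  obtain ⟨Z, rfl⟩ := mk_surjective z
  exact ⟨_, binaryBiproductTriangle_distinguished X Z, rfl, rfl, rfl⟩

lemma exists_isExtension_zero (x : IsoClass C) : ∃ z, IsExtension x 0 z := by
  obtain ⟨X, rfl⟩ := mk_surjective x
  exact ⟨_, _, contractible_distinguished₂ X, rfl, rfl, rfl⟩

lemma IsExtension.add {x y z x' y' z' : IsoClass C} (h : IsExtension x y z)
    (h' : IsExtension x' y' z') : IsExtension (x + x') (y + y') (z + z') := by
  obtain ⟨S, hS, rfl, rfl, rfl⟩ := h
  obtain ⟨S', hS', rfl, rfl, rfl⟩ := h'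
  let Tr (j : WalkingPair) : Triangle C := WalkingPair.casesOn j S S'
  refine ⟨productTriangle Tr, productTriangle_distinguished Tr ?_, mk_piObj fun j => (Tr j).obj₁,
    mk_piObj fun j => (Tr j).obj₂, mk_piObj fun j => (Tr j).obj₃⟩
  rintro (_ | _) <;> assumption

lemma exists_mk_add_eq_of_retract {X Y : C} (h : Retract X Y) : ∃ z, mk X + z = mk Y := by
  obtain ⟨Z, g, δ, hT⟩ := distinguished_cocone_triangle h.i
  have hδ : δ = 0 := Triangle.mor₃_eq_zero_of_mono₁ _ hT (inferInstanceAs (Mono h.i))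
  obtain ⟨e, -⟩ := exists_iso_binaryBiproduct_of_distTriang _ hT hδ
  exact ⟨mk Z, (mk_eq_mk_of_iso e).symm⟩

lemma exists_add_eq_map_of_retract {A : Type u'} [Category.{v'} A] [HasZeroMorphisms A]
    [HasZeroObject A] [HasBinaryBiproducts A] (F : A ⥤ C) [F.PreservesZeroMorphisms]
    [PreservesBinaryBiproducts F] (hF : ∀ Y : C, ∃ X : A, Nonempty (Retract Y (F.obj X)))
    (y : IsoClass C) : ∃ y' x, y + y' = map F x := by
  obtain ⟨Y, rfl⟩ := mk_surjective y
  obtain ⟨X, ⟨h⟩⟩ := hF Y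
  obtain ⟨y', hy'⟩ := exists_mk_add_eq_of_retract h
  exact ⟨y', mk X, hy'⟩

variable {D : Type u'} [Category.{v'} D] [HasZeroObject D] [Preadditive D]
  [HasShift D ℤ] [∀ n : ℤ, (shiftFunctor D n).Additive] [Pretriangulated D]

instance (F : C ⥤ D) [F.CommShift ℤ] [F.IsTriangulated] : PreservesBinaryBiproducts F :=
  preservesBinaryBiproducts_of_preservesBinaryProducts F

lemma IsExtension.exists_of_map (F : C ⥤ D) [F.CommShift ℤ] [F.IsTriangulated] [F.Full]
    {x z : IsoClass C} {y : IsoClass D} (h : IsExtension (map F x) y (map F z)) :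
    ∃ w, map F w = y ∧ IsExtension x w z := by
  obtain ⟨X, rfl⟩ := mk_surjective x
  obtain ⟨Z, rfl⟩ := mk_surjective z
  obtain ⟨Tr, hTr, h₁, rfl, h₃⟩ := h
  obtain ⟨e₁⟩ := mk_eq_mk_iff.1 h₁
  obtain ⟨e₃⟩ := mk_eq_mk_iff.1 h₃
  obtain ⟨δ, hδ⟩ := F.map_surjective
    (e₃.inv ≫ Tr.mor₃ ≫ e₁.hom⟦(1 : ℤ)⟧' ≫ (F.commShiftIso (1 : ℤ)).inv.app X)
  obtain ⟨W, f, g, hW⟩ := distinguished_cocone_triangle₂ δ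
  have comm : Tr.mor₃ ≫ e₁.hom⟦(1 : ℤ)⟧' =
      e₃.hom ≫ F.map δ ≫ (F.commShiftIso (1 : ℤ)).hom.app X := by
    simp [hδ]
  let e : Tr ≅ F.mapTriangle.obj (Triangle.mk f g δ) :=
    isoTriangleOfIso₁₃ _ _ hTr (F.map_distinguished _ hW) e₁ e₃ comm
  exact ⟨mk W, (mk_eq_mk_of_iso (Triangle.π₂.mapIso e)).symm, _, hW, rfl, rfl, rfl⟩

variable (C) in
/-- The congruence on isomorphism classes in Landsburg's criterion: `a` and `b` are related if,
after adding a common summand, both are extensions of the same `e` by the same `c`. -/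
def landsburgCon : AddCon (IsoClass C) where
  r a b := ∃ c d e, IsExtension c (a + d) e ∧ IsExtension c (b + d) e
  iseqv.refl a := ⟨a, 0, 0, isExtension_add a 0, isExtension_add a 0⟩
  iseqv.symm := fun ⟨c, d, e, ha, hb⟩ => ⟨c, d, e, hb, ha⟩
  iseqv.trans {a b f} := by
    rintro ⟨c, d, e, ha, hb⟩ ⟨c', d', e', hb', hf⟩
    refine ⟨c + c', b + d + d', e + e', ?_, ?_⟩
    · convert ha.add hb' using 1
      abel
    · convert hb.add hf using 1
      abel
  add' {a b a' b'} := by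
    rintro ⟨c, d, e, ha, hb⟩ ⟨c', d', e', ha', hb'⟩
    refine ⟨c + c', d + d', e + e', ?_, ?_⟩
    · simpa only [add_add_add_comm] using ha.add ha'
    · simpa only [add_add_add_comm] using hb.add hb'

lemma IsExtension.landsburgCon {x y z : IsoClass C} (h : IsExtension x y z) :
    landsburgCon C y (x + z) :=
  ⟨x, 0, z, by simpa only [add_zero] using h, by simpa only [add_zero] using isExtension_add x z⟩

lemma isAddUnit_landsburgCon_mk (x : IsoClass C) :
    IsAddUnit (x : (landsburgCon C).Quotient) := by
  obtain ⟨z, hz⟩ := exists_isExtension_zero x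
  exact .of_add_eq_zero (z : (landsburgCon C).Quotient)
    ((AddCon.eq _).2 hz.landsburgCon).symm

end Pretriangulated

end IsoClass

open IsoClass

variable {C : Type u} [Category.{v} C] [HasZeroObject C] [Preadditive C]
  [HasShift C ℤ] [∀ n : ℤ, (shiftFunctor C n).Additive] [Pretriangulated C]

namespace K0

/-- The class in `K₀` of an isomorphism class of objects. -/
def of (x : IsoClass C) : K0 C := QuotientAddGroup.mk (FreeAbelianGroup.of x)

lemma of_eq_add_of_isExtension {x y z : IsoClass C} (h : IsExtension x y z) :
    of y = of x + of z := by
  obtain ⟨Tr, hTr, rfl, rfl, rfl⟩ := h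
  have rel : of (mk Tr.obj₂) - of (mk Tr.obj₁) - of (mk Tr.obj₃) = 0 :=
    (QuotientAddGroup.eq_zero_iff _).2 (AddSubgroup.subset_closure ⟨Tr, hTr, rfl⟩)
  rwa [sub_sub, sub_eq_zero] at rel

lemma of_add (x z : IsoClass C) : of (x + z) = of x + of z :=
  of_eq_add_of_isExtension (isExtension_add x z)

lemma of_zero : of (0 : IsoClass C) = 0 := by
  simpa only [add_zero, left_eq_add] using of_add (0 : IsoClass C) 0

lemma exists_of_eq_neg (x : IsoClass C) : ∃ z, of z = -of x := by
  obtain ⟨z, hz⟩ := exists_isExtension_zero x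
  have sum_zero : 0 = of x + of z := of_zero.symm.trans (of_eq_add_of_isExtension hz)
  exact ⟨z, eq_neg_of_add_eq_zero_right sum_zero.symm⟩

lemma of_surjective : Function.Surjective (of : IsoClass C → K0 C) := by
  intro a
  obtain ⟨a, rfl⟩ := QuotientAddGroup.mk_surjective a
  induction a using FreeAbelianGroup.induction_on with
  | zero => exact ⟨0, of_zero⟩
  | of x => exact ⟨x, rfl⟩
  | neg x _ => exact exists_of_eq_neg x
  | add a b ha hb =>
    obtain ⟨x, hx⟩ := ha
    obtain ⟨y, hy⟩ := hb
    exact ⟨x + y, (of_add x y).trans (congrArg₂ (· + ·) hx hy)⟩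

/-- The universal property of `K₀`: a map on isomorphism classes with values in an abelian group
which is additive on distinguished triangles extends to `K₀`. -/
def lift {G : Type*} [AddCommGroup G] (f : IsoClass C → G)
    (hf : ∀ x y z, IsExtension x y z → f y = f x + f z) : K0 C →+ G :=
  QuotientAddGroup.lift _ (FreeAbelianGroup.lift f) <| by
    refine (AddSubgroup.closure_le _).2 ?_
    rintro _ ⟨Tr, hTr, rfl⟩
    have lift_rel : FreeAbelianGroup.lift f (.of (mk Tr.obj₂) - .of (mk Tr.obj₁) -
        .of (mk Tr.obj₃)) = 0 := by
      rw [sub_sub, map_sub, map_add, sub_eq_zero]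
      simp only [FreeAbelianGroup.lift_apply_of]
      exact hf _ _ _ ⟨Tr, hTr, rfl, rfl, rfl⟩
    exact lift_rel

lemma lift_of {G : Type*} [AddCommGroup G] (f : IsoClass C → G)
    (hf : ∀ x y z, IsExtension x y z → f y = f x + f z) (x : IsoClass C) :
    lift f hf (of x) = f x :=
  FreeAbelianGroup.lift_apply_of f x

theorem of_eq_of_iff_landsburgCon {a b : IsoClass C} : of a = of b ↔ landsburgCon C a b := by
  constructor
  · intro h
    let q (x : IsoClass C) : AddUnits (landsburgCon C).Quotient :=
      (isAddUnit_landsburgCon_mk x).addUnit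
    have q_additive (x y z : IsoClass C) (hxyz : IsExtension x y z) : q y = q x + q z :=
      AddUnits.ext ((AddCon.eq _).2 hxyz.landsburgCon)
    have hq : q a = q b := by
      rw [← lift_of q q_additive a, h, lift_of]
    exact (AddCon.eq _).1 (congrArg AddUnits.val hq)
  · rintro ⟨c, d, e, ha, hb⟩
    have h : of (a + d) = of (b + d) := by
      rw [of_eq_add_of_isExtension ha, of_eq_add_of_isExtension hb]
    simpa only [of_add, add_left_inj] using h

end K0

lemma K0Map_of {D : Type u'} [Category.{v'} D] [HasZeroObject D] [Preadditive D]
    [HasShift D ℤ] [∀ n : ℤ, (shiftFunctor D n).Additive] [Pretriangulated D]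
    (F : C ⥤ D) [F.CommShift ℤ] [F.IsTriangulated] (x : IsoClass C) :
    K0Map F (K0.of x) = K0.of (IsoClass.map F x) :=
  congrArg _ (FreeAbelianGroup.map_of_apply x)

end Paper

open Paper IsoClass in
theorem stmt1_general {T : Type u} [Category.{v} T] [HasZeroObject T] [Preadditive T]
    [HasShift T ℤ] [∀ n : ℤ, (shiftFunctor T n).Additive] [Pretriangulated T]
    {T' : Type u'} [Category.{v'} T'] [HasZeroObject T'] [Preadditive T']
    [HasShift T' ℤ] [∀ n : ℤ, (shiftFunctor T' n).Additive] [Pretriangulated T']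
    (ι : T ⥤ T') [ι.CommShift ℤ] [ι.IsTriangulated] [ι.Full] [ι.Faithful]
    (hι : ∀ Y : T', ∃ X : T, Nonempty (Retract Y (ι.obj X))) :
    Function.Injective (K0Map ι) := by
  intro α β hαβ
  obtain ⟨a, rfl⟩ := K0.of_surjective α
  obtain ⟨b, rfl⟩ := K0.of_surjective β
  rw [K0Map_of, K0Map_of] at hαβ
  obtain ⟨c, d, e, ha, hb⟩ := K0.of_eq_of_iff_landsburgCon.1 hαβ
  obtain ⟨c', p, hp⟩ := exists_add_eq_map_of_retract ι hι c
  obtain ⟨e', q, hq⟩ := exists_add_eq_map_of_retract ι hι e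
  replace ha := ha.add (isExtension_add c' e')
  replace hb := hb.add (isExtension_add c' e')
  rw [hp, hq] at ha hb
  obtain ⟨u, hu, ext_u⟩ := ha.exists_of_map ι
  obtain ⟨v, hv, ext_v⟩ := hb.exists_of_map ι
  have sum_eq : u + b = v + a := by
    apply map_injective ι
    rw [map_add, map_add, hu, hv]
    abel
  have of_u_eq_of_v : K0.of u = K0.of v := by
    rw [K0.of_eq_add_of_isExtension ext_u, K0.of_eq_add_of_isExtension ext_v]
  have of_sum_eq : K0.of u + K0.of b = K0.of v + K0.of a := by
    rw [← K0.of_add, ← K0.of_add, sum_eq]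
  exact (add_left_cancel (of_u_eq_of_v ▸ of_sum_eq)).symm

/-- For an essentially small pretriangulated category `T`, the canonical
map `K₀(T) → K₀(T~)` induced by the (triangulated) fully faithful embedding of `T` into
its idempotent completion `T~` is injective. -/
theorem stmt1 {T : Type u} [Category.{v} T] [HasZeroObject T] [Preadditive T]
    [HasShift T ℤ] [∀ n : ℤ, (shiftFunctor T n).Additive] [Pretriangulated T]
    [EssentiallySmall.{w} T]
    {T' : Type u'} [Category.{v'} T'] [HasZeroObject T'] [Preadditive T']
    [HasShift T' ℤ] [∀ n : ℤ, (shiftFunctor T' n).Additive] [Pretriangulated T']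
    (ι : T ⥤ T') [ι.CommShift ℤ] [ι.IsTriangulated]
    (hι : Paper.IsIdempotentCompletion ι) :
    Function.Injective (Paper.K0Map ι) := by
  obtain ⟨_, _, _, dense⟩ := hι
  exact stmt1_general ι fun Y => let ⟨X, s, r, hsr⟩ := dense Y; ⟨X, ⟨⟨s, r, hsr⟩⟩⟩
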